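/- There exist a continuous probability density ϱ with compact support on ℝ² and a Borel vector field b: ℝ² → ℝ² with compact support such that |b|ϱ ∈ L¹(ℝ²), the equation Δϱ − div(ϱb) = 0 holds in the weak sense, but ϱ does not belong to the Sobolev class W^{1,1}_loc(ℝ²). -/

import Mathlib

open MeasureTheory Real

noncomputable section

/-- First partial derivative (with respect to the first coordinate) on `ℝ²`. -/
def pd1 (f : ℝ × ℝ → ℝ) (p : ℝ × ℝ) : ℝ := fderiv ℝ f p (1, 0)

/-- Second partial derivative (with respect to the second coordinate) on `ℝ²`. -/
def pd2 (f : ℝ × ℝ → ℝ) (p : ℝ × ℝ) : ℝ := fderiv ℝ f p (0, 1)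

/-- Test functions: smooth compactly supported functions on `ℝ²`. -/
def IsTest (φ : ℝ × ℝ → ℝ) : Prop := ContDiff ℝ (⊤ : ℕ∞) φ ∧ HasCompactSupport φ

/-- Euclidean magnitude of a vector in `ℝ²`. -/
def emag (v : ℝ × ℝ) : ℝ := Real.sqrt (v.1 ^ 2 + v.2 ^ 2)

/-- Membership in the Sobolev class `W^{1,1}(ℝ²)`: the function is integrable and possesses
integrable weak first-order partial derivatives. -/
def MemW11 (f : ℝ × ℝ → ℝ) : Prop :=
  Integrable f ∧
    ∃ g₁ g₂ : ℝ × ℝ → ℝ, Integrable g₁ ∧ Integrable g₂ ∧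
      (∀ φ : ℝ × ℝ → ℝ, IsTest φ → ∫ p, g₁ p * φ p = - ∫ p, f p * pd1 φ p) ∧
      (∀ φ : ℝ × ℝ → ℝ, IsTest φ → ∫ p, g₂ p * φ p = - ∫ p, f p * pd2 φ p)

/-- Membership in `W^{1,1}_loc(ℝ²)`: `ζ f ∈ W^{1,1}(ℝ²)` for every test function `ζ`. -/
def MemW11loc (f : ℝ × ℝ → ℝ) : Prop :=
  ∀ ζ : ℝ × ℝ → ℝ, IsTest ζ → MemW11 (fun p => ζ p * f p)


lemma pd1_contDiff {f : ℝ × ℝ → ℝ} (hf : ContDiff ℝ (⊤ : ℕ∞) f) :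
    ContDiff ℝ (⊤ : ℕ∞) (pd1 f) := by
  unfold pd1
  exact (hf.fderiv_right (m := (⊤ : ℕ∞)) (by simp)).clm_apply contDiff_const

lemma pd2_contDiff {f : ℝ × ℝ → ℝ} (hf : ContDiff ℝ (⊤ : ℕ∞) f) :
    ContDiff ℝ (⊤ : ℕ∞) (pd2 f) := by
  unfold pd2
  exact (hf.fderiv_right (m := (⊤ : ℕ∞)) (by simp)).clm_apply contDiff_const

lemma IsTest.pd1 {f : ℝ × ℝ → ℝ} (hf : IsTest f) : IsTest (pd1 f) :=
  ⟨pd1_contDiff hf.1, hf.2.fderiv_apply (𝕜 := ℝ) (1, 0)⟩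

lemma IsTest.pd2 {f : ℝ × ℝ → ℝ} (hf : IsTest f) : IsTest (pd2 f) :=
  ⟨pd2_contDiff hf.1, hf.2.fderiv_apply (𝕜 := ℝ) (0, 1)⟩

lemma IsTest.cont {f : ℝ × ℝ → ℝ} (hf : IsTest f) : Continuous f := hf.1.continuous

lemma IsTest.diff {f : ℝ × ℝ → ℝ} (hf : IsTest f) : Differentiable ℝ f :=
  hf.1.differentiable (by simp)

lemma IsTest.int {f : ℝ × ℝ → ℝ} (hf : IsTest f) : Integrable f :=
  hf.cont.integrable_of_hasCompactSupport hf.2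

lemma IsTest.int_mul {f g : ℝ × ℝ → ℝ} (hf : IsTest f) (hg : Continuous g) :
    Integrable (fun p => f p * g p) :=
  (hf.cont.mul hg).integrable_of_hasCompactSupport hf.2.mul_right

lemma IsTest.int_mul' {f g : ℝ × ℝ → ℝ} (hf : IsTest f) (hg : Continuous g) :
    Integrable (fun p => g p * f p) :=
  (hg.mul hf.cont).integrable_of_hasCompactSupport hf.2.mul_left

lemma IsTest.bdd {f : ℝ × ℝ → ℝ} (hf : IsTest f) : ∃ C, 0 ≤ C ∧ ∀ p, |f p| ≤ C := by
  obtain ⟨C, hC⟩ := hf.2.exists_bound_of_continuous hf.cont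
  exact ⟨C, (norm_nonneg _).trans (hC 0), hC⟩

lemma parts1 {f g : ℝ × ℝ → ℝ} (hf : IsTest f) (hg : IsTest g) :
    ∫ p, f p * pd1 g p = - ∫ p, pd1 f p * g p :=
  integral_mul_fderiv_eq_neg_fderiv_mul_of_integrable
    (hf.pd1.int_mul hg.cont) (hf.int_mul hg.pd1.cont) (hf.int_mul hg.cont)
    (fun x _ => hf.diff x) (fun x _ => hg.diff x)

lemma parts2 {f g : ℝ × ℝ → ℝ} (hf : IsTest f) (hg : IsTest g) :
    ∫ p, f p * pd2 g p = - ∫ p, pd2 f p * g p :=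
  integral_mul_fderiv_eq_neg_fderiv_mul_of_integrable
    (hf.pd2.int_mul hg.cont) (hf.int_mul hg.pd2.cont) (hf.int_mul hg.cont)
    (fun x _ => hf.diff x) (fun x _ => hg.diff x)

lemma pd_comm {f : ℝ × ℝ → ℝ} (hf : ContDiff ℝ (⊤ : ℕ∞) f) (p : ℝ × ℝ) :
    pd1 (pd2 f) p = pd2 (pd1 f) p := by
  have h : IsSymmSndFDerivAt ℝ f p :=
    hf.contDiffAt.isSymmSndFDerivAt (by simp only [minSmoothness_of_isRCLikeNormedField]; exact WithTop.coe_le_coe.2 (le_top : (2:ℕ∞) ≤ ⊤))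
  have hd : DifferentiableAt ℝ (fderiv ℝ f) p :=
    ((hf.fderiv_right (m := (⊤ : ℕ∞)) (by simp)).differentiable (by simp)) p
  unfold pd1 pd2
  rw [fderiv_clm_apply hd (differentiableAt_const _), fderiv_clm_apply hd (differentiableAt_const _)]
  simp
  exact h _ _

/-- The Laplacian. -/
def lap (f : ℝ × ℝ → ℝ) (p : ℝ × ℝ) : ℝ := pd1 (pd1 f) p + pd2 (pd2 f) p

lemma IsTest.add {f g : ℝ × ℝ → ℝ} (hf : IsTest f) (hg : IsTest g) :
    IsTest (fun p => f p + g p) := ⟨hf.1.add hg.1, hf.2.add hg.2⟩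

lemma IsTest.lap {f : ℝ × ℝ → ℝ} (hf : IsTest f) : IsTest (lap f) :=
  hf.pd1.pd1.add hf.pd2.pd2

/-- `Δ(∂₁ψ) = div (Δψ, 0)` weakly. -/
lemma weak_block {φ ψ : ℝ × ℝ → ℝ} (hφ : IsTest φ) (hψ : IsTest ψ) :
    ∫ p, (lap φ p * pd1 ψ p + pd1 φ p * lap ψ p) = 0 := by
  have e1 : ∫ p, pd1 (pd1 φ) p * pd1 ψ p = - ∫ p, pd1 φ p * pd1 (pd1 ψ) p := by
    rw [parts1 hφ.pd1 hψ.pd1]; ring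
  have e2 : ∫ p, pd2 (pd2 φ) p * pd1 ψ p = - ∫ p, pd1 φ p * pd2 (pd2 ψ) p := by
    have a1 := parts2 hφ.pd2 hψ.pd1
    have a2 := parts1 hφ.pd2 hψ.pd2
    have a3 := parts2 hφ.pd1 hψ.pd2
    simp only [pd_comm hφ.1, pd_comm hψ.1] at a2
    linarith
  have i1 := hφ.pd1.pd1.int_mul hψ.pd1.cont
  have i2 := hφ.pd2.pd2.int_mul hψ.pd1.cont
  have i3 := hφ.pd1.int_mul hψ.pd1.pd1.cont
  have i4 := hφ.pd1.int_mul hψ.pd2.pd2.cont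
  have : ∀ p, lap φ p * pd1 ψ p + pd1 φ p * lap ψ p =
      (pd1 (pd1 φ) p * pd1 ψ p + pd2 (pd2 φ) p * pd1 ψ p) +
      (pd1 φ p * pd1 (pd1 ψ) p + pd1 φ p * pd2 (pd2 ψ) p) := by
    intro p; unfold _root_.lap; ring
  simp_rw [this]
  rw [integral_add (i1.fun_add i2) (i3.fun_add i4), integral_add i1 i2, integral_add i3 i4, e1, e2]
  ring

lemma weak_smooth {φ ψ : ℝ × ℝ → ℝ} (hφ : IsTest φ) (hψ : IsTest ψ) :
    ∫ p, (lap φ p * ψ p + (pd1 φ p * pd1 ψ p + pd2 φ p * pd2 ψ p)) = 0 := by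
  have e1 := parts1 hφ.pd1 hψ
  have e2 := parts2 hφ.pd2 hψ
  have i1 := hφ.pd1.pd1.int_mul hψ.cont
  have i2 := hφ.pd2.pd2.int_mul hψ.cont
  have i3 := hφ.pd1.int_mul hψ.pd1.cont
  have i4 := hφ.pd2.int_mul hψ.pd2.cont
  have : ∀ p, lap φ p * ψ p + (pd1 φ p * pd1 ψ p + pd2 φ p * pd2 ψ p) =
      (pd1 (pd1 φ) p * ψ p + pd2 (pd2 φ) p * ψ p) +
      (pd1 φ p * pd1 ψ p + pd2 φ p * pd2 ψ p) := by
    intro p; unfold _root_.lap; ring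
  simp_rw [this]
  rw [integral_add (i1.fun_add i2) (i3.fun_add i4), integral_add i1 i2, integral_add i3 i4, e1, e2]
  ring

/-- Rows of a matrix bounded, diagonal unbounded: some `ℓ¹` vector has unbounded image. -/
lemma exists_l1_unbounded (m : ℕ → ℕ → ℝ) (hm : ∀ k, ∃ C, ∀ j, |m k j| ≤ C)
    (hd : ∀ k : ℕ, (k : ℝ) ≤ m k k) :
    ∃ a : ℕ → ℝ, Summable (fun j => |a j|) ∧ ∀ C, ∃ k, C < |∑' j, a j * m k j| := by
  choose C hC using hm
  have hsum : ∀ a : lp (fun _ : ℕ => ℝ) 1, Summable (fun j => |a j|) := fun a => by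
    simpa using (lp.memℓp a).summable (by simp)
  have hnorm : ∀ a : lp (fun _ : ℕ => ℝ) 1, ‖a‖ = ∑' j, |a j| := fun a => by
    simpa using lp.norm_eq_tsum_rpow (p := 1) (by simp) a
  have hs : ∀ k (a : lp (fun _ : ℕ => ℝ) 1), Summable (fun j => |a j * m k j|) := fun k a => by
    refine Summable.of_nonneg_of_le (fun _ => abs_nonneg _) (fun j => ?_) ((hsum a).mul_right (C k))
    rw [abs_mul]; exact mul_le_mul_of_nonneg_left (hC k j) (abs_nonneg _)
  have hle : ∀ k (a : lp (fun _ : ℕ => ℝ) 1), |∑' j, a j * m k j| ≤ C k * ‖a‖ := fun k a => by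
    have h1 : |∑' j, a j * m k j| ≤ ∑' j, |a j * m k j| :=
      norm_tsum_le_tsum_norm (f := fun j => a j * m k j) (hs k a)
    have h2 : ∑' j, |a j * m k j| ≤ ∑' j, |a j| * C k := by
      refine (hs k a).tsum_le_tsum (fun j => ?_) ((hsum a).mul_right (C k))
      rw [abs_mul]; exact mul_le_mul_of_nonneg_left (hC k j) (abs_nonneg _)
    rw [tsum_mul_right, ← hnorm] at h2
    linarith
  let L : ℕ → (lp (fun _ : ℕ => ℝ) 1 →ₗ[ℝ] ℝ) := fun k =>
      { toFun := fun a => ∑' j, a j * m k j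
        map_add' := fun a b => by
          rw [← ((hs k a).of_abs).tsum_add ((hs k b).of_abs)]
          refine tsum_congr fun j => ?_
          rw [lp.coeFn_add, Pi.add_apply, add_mul]
        map_smul' := fun c a => by
          rw [RingHom.id_apply, smul_eq_mul, ← tsum_mul_left]
          refine tsum_congr fun j => ?_
          rw [lp.coeFn_smul, Pi.smul_apply, smul_eq_mul, mul_assoc] }
  let T : ℕ → (lp (fun _ : ℕ => ℝ) 1 →L[ℝ] ℝ) := fun k => (L k).mkContinuous (C k) (hle k)
  by_contra hcon
  push Not at hcon
  have hb : ∀ a : lp (fun _ : ℕ => ℝ) 1, ∃ D, ∀ k, ‖T k a‖ ≤ D := fun a => hcon _ (hsum a)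
  obtain ⟨D, hD⟩ := banach_steinhaus hb
  obtain ⟨k, hk⟩ := exists_nat_gt D
  have h1 := (T k).le_opNorm (lp.single 1 k (1 : ℝ))
  rw [lp.norm_single (by simp)] at h1
  have h2 : T k (lp.single 1 k (1 : ℝ)) = m k k := by
    show ∑' j, (lp.single 1 k (1 : ℝ) : lp (fun _ : ℕ => ℝ) 1) j * m k j = _
    rw [tsum_eq_single k]
    · simp
    · intro j hj; simp [hj]
  rw [h2] at h1
  have h3 := le_abs_self (m k k)
  simp at h1
  linarith [hd k, hD k]

/-- A series with summable L¹ norms is integrable. -/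
lemma integrable_tsum' {F : ℕ → ℝ × ℝ → ℝ} (hF : ∀ j, Continuous (F j))
    (hi : ∀ j, Integrable (F j)) (hs : Summable fun j => ∫ p, ‖F j p‖) :
    Integrable (fun p => ∑' j, F j p) := by
  refine ⟨(Measurable.tsum fun j => (hF j).measurable).aestronglyMeasurable, ?_⟩
  have : (∑' j, ∫⁻ p, ‖F j p‖ₑ) ≠ ⊤ := by
    have h : ∀ j, ∫⁻ p, ‖F j p‖ₑ = ENNReal.ofReal (∫ p, ‖F j p‖) := fun j => by
      rw [ofReal_integral_norm_eq_lintegral_enorm (hi j)]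
    simp_rw [h]
    exact hs.tsum_ofReal_ne_top
  rw [← lintegral_tsum (fun j => (hF j).enorm.measurable.aemeasurable)] at this
  refine lt_of_le_of_lt (lintegral_mono fun p => ?_) (lt_top_iff_ne_top.2 this)
  exact enorm_tsum_le_tsum_enorm


/-- `f` vanishes outside the closed ball of radius `r`. -/
def SuppIn (r : ℝ) (f : ℝ × ℝ → ℝ) : Prop := ∀ p, r < ‖p‖ → f p = 0

lemma SuppIn.fderiv {r : ℝ} {f : ℝ × ℝ → ℝ} (hf : SuppIn r f) {p : ℝ × ℝ} (hp : r < ‖p‖) :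
    fderiv ℝ f p = 0 := by
  have : f =ᶠ[nhds p] fun _ => 0 := by
    filter_upwards [(isOpen_lt continuous_const continuous_norm).mem_nhds hp] with q hq
    exact hf q hq
  rw [this.fderiv_eq]; simp

lemma SuppIn.pd1 {r : ℝ} {f : ℝ × ℝ → ℝ} (hf : SuppIn r f) : SuppIn r (pd1 f) := fun p hp => by
  simp [_root_.pd1, hf.fderiv hp]

lemma SuppIn.pd2 {r : ℝ} {f : ℝ × ℝ → ℝ} (hf : SuppIn r f) : SuppIn r (pd2 f) := fun p hp => by
  simp [_root_.pd2, hf.fderiv hp]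

lemma SuppIn.lap {r : ℝ} {f : ℝ × ℝ → ℝ} (hf : SuppIn r f) : SuppIn r (lap f) := fun p hp => by
  simp [_root_.lap, hf.pd1.pd1 p hp, hf.pd2.pd2 p hp]

lemma SuppIn.compact {r : ℝ} {f : ℝ × ℝ → ℝ} (hf : SuppIn r f) : HasCompactSupport f := by
  refine HasCompactSupport.intro (isCompact_closedBall (0 : ℝ × ℝ) r) fun p hp => hf p ?_
  simpa using hp

/-- Centres of the four quarter squares. -/
def ctr (i : Bool × Bool) : ℝ × ℝ := (if i.1 then 1 else -1, if i.2 then 1 else -1)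

/-- Four half-size copies. -/
def four (f : ℝ × ℝ → ℝ) (p : ℝ × ℝ) : ℝ := ∑ i : Bool × Bool, f ((2 : ℝ) • p - ctr i)

lemma ctr_sep {i j : Bool × Bool} (h : i ≠ j) : 2 ≤ ‖ctr i - ctr j‖ := by
  rcases i with ⟨_ | _, _ | _⟩ <;> rcases j with ⟨_ | _, _ | _⟩ <;>
    first
    | exact absurd rfl h
    | (simp only [ctr, Prod.norm_def, Prod.fst_sub, Prod.snd_sub]; norm_num)

lemma norm_ctr (i : Bool × Bool) : ‖ctr i‖ = 1 := by
  rcases i with ⟨_ | _, _ | _⟩ <;> simp [ctr, Prod.norm_def]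

lemma exists_quad (p : ℝ × ℝ) : ∃ j, ∀ i, i ≠ j → 1 ≤ ‖(2 : ℝ) • p - ctr i‖ := by
  by_cases h : ∃ j, ‖(2 : ℝ) • p - ctr j‖ < 1
  · obtain ⟨j, hj⟩ := h
    refine ⟨j, fun i hi => ?_⟩
    by_contra hlt
    push Not at hlt
    have h1 := ctr_sep hi
    have h2 : ctr i - ctr j = ((2 : ℝ) • p - ctr j) - ((2 : ℝ) • p - ctr i) := by abel
    rw [h2] at h1
    linarith [norm_sub_le ((2 : ℝ) • p - ctr j) ((2 : ℝ) • p - ctr i)]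
  · push Not at h
    exact ⟨(true, true), fun i _ => h i⟩

lemma four_eq {p : ℝ × ℝ} {j : Bool × Bool} (hj : ∀ i, i ≠ j → 1 ≤ ‖(2 : ℝ) • p - ctr i‖)
    {r : ℝ} (hr : r < 1) {f : ℝ × ℝ → ℝ} (hf : SuppIn r f) :
    four f p = f ((2 : ℝ) • p - ctr j) := by
  unfold four
  rw [Finset.sum_eq_single j]
  · intro i _ hi
    exact hf _ (hr.trans_le (hj i hi))
  · simp

lemma four_contDiff {f : ℝ × ℝ → ℝ} (hf : ContDiff ℝ (⊤ : ℕ∞) f) :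
    ContDiff ℝ (⊤ : ℕ∞) (four f) := by
  unfold four
  exact ContDiff.sum fun i _ => hf.comp ((contDiff_id.const_smul (2 : ℝ)).sub contDiff_const)

lemma four_suppIn {r : ℝ} {f : ℝ × ℝ → ℝ} (hf : SuppIn r f) : SuppIn ((r + 1) / 2) (four f) := by
  intro p hp
  refine Finset.sum_eq_zero fun i _ => hf _ ?_
  have h1 := norm_sub_norm_le ((2 : ℝ) • p) (ctr i)
  rw [norm_smul, norm_ctr] at h1
  simp at h1
  linarith

lemma four_fderiv {f : ℝ × ℝ → ℝ} (hf : Differentiable ℝ f) (c : ℝ) (p v : ℝ × ℝ) :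
    fderiv ℝ (fun p => c * four f p) p v =
      2 * c * four (fun p => fderiv ℝ f p v) p := by
  have h : ∀ i, HasFDerivAt (fun p : ℝ × ℝ => f ((2 : ℝ) • p - ctr i))
      ((fderiv ℝ f ((2 : ℝ) • p - ctr i)).comp ((2 : ℝ) • ContinuousLinearMap.id ℝ (ℝ × ℝ))) p := by
    intro i
    exact (hf _).hasFDerivAt.comp p (((hasFDerivAt_id p).const_smul (2 : ℝ)).sub_const (ctr i))
  have h2 : HasFDerivAt (fun p => c * four f p) _ p :=
    (HasFDerivAt.fun_sum (u := Finset.univ) fun i _ => h i).const_mul c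
  rw [h2.fderiv]
  simp [four, Finset.mul_sum]
  refine Finset.sum_congr rfl fun i _ => ?_
  ring

lemma four_integral (f : ℝ × ℝ → ℝ) (hf : Integrable f) : ∫ p, four f p = ∫ p, f p := by
  have hi : ∀ i, Integrable (fun p : ℝ × ℝ => f ((2 : ℝ) • p - ctr i)) := fun i =>
    (hf.comp_sub_right (ctr i)).comp_smul (R := (2 : ℝ)) (by norm_num)
  unfold four
  rw [integral_finsetSum _ fun i _ => hi i]
  have : ∀ i, ∫ p : ℝ × ℝ, f ((2 : ℝ) • p - ctr i) = 1 / 4 * ∫ p, f p := fun i => by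
    rw [Measure.integral_comp_smul volume (fun q => f (q - ctr i)) (2 : ℝ),
      integral_sub_right_eq_self]
    simp
    norm_num
  simp_rw [this]
  simp

/-- The quantitative building block. -/
def Good (s L M : ℝ) : Prop := ∃ (ψ φ : ℝ × ℝ → ℝ) (r : ℝ), r < 1 ∧
  ContDiff ℝ (⊤ : ℕ∞) ψ ∧ ContDiff ℝ (⊤ : ℕ∞) φ ∧ SuppIn r ψ ∧ SuppIn r φ ∧
  (∀ p, |φ p| ≤ 1) ∧ (∀ p, |pd1 ψ p| ≤ s) ∧ ∫ p, |lap ψ p| ≤ L ∧ M ≤ ∫ p, pd1 ψ p * pd2 φ p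

lemma Good.half {s L M : ℝ} (h : Good s L M) : Good (s / 2) L M := by
  obtain ⟨ψ, φ, r, hr, hψ, hφ, sψ, sφ, bφ, bψ, hL, hM⟩ := h
  have tψ : IsTest ψ := ⟨hψ, sψ.compact⟩
  have tφ : IsTest φ := ⟨hφ, sφ.compact⟩
  have d1 : ∀ c (f : ℝ × ℝ → ℝ), Differentiable ℝ f →
      pd1 (fun p => c * four f p) = fun p => 2 * c * four (pd1 f) p := fun c f hf => by
    funext p; exact four_fderiv hf c p (1, 0)
  have d2 : ∀ c (f : ℝ × ℝ → ℝ), Differentiable ℝ f →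
      pd2 (fun p => c * four f p) = fun p => 2 * c * four (pd2 f) p := fun c f hf => by
    funext p; exact four_fderiv hf c p (0, 1)
  refine ⟨fun p => 1 / 4 * four ψ p, fun p => 1 * four φ p, (r + 1) / 2, by linarith,
    contDiff_const.mul (four_contDiff hψ), contDiff_const.mul (four_contDiff hφ),
    fun p hp => by simp [four_suppIn sψ p hp], fun p hp => by simp [four_suppIn sφ p hp],
    ?_, ?_, ?_, ?_⟩
  · intro p
    obtain ⟨j, hj⟩ := exists_quad p
    simp only [one_mul]
    rw [four_eq hj hr sφ]
    exact bφ _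
  · intro p
    obtain ⟨j, hj⟩ := exists_quad p
    rw [d1 _ _ tψ.diff]
    simp only
    rw [four_eq hj hr sψ.pd1, abs_mul]
    have := bψ ((2 : ℝ) • p - ctr j)
    rw [abs_of_nonneg (by norm_num)]
    linarith
  · have : ∀ p, |lap (fun p => 1 / 4 * four ψ p) p| = four (fun p => |lap ψ p|) p := by
      intro p
      obtain ⟨j, hj⟩ := exists_quad p
      rw [four_eq hj hr (f := fun p => |lap ψ p|) (fun p hp => by simp [sψ.lap p hp])]
      unfold lap
      rw [d1 _ _ tψ.diff, d1 _ _ tψ.pd1.diff, d2 _ _ tψ.diff, d2 _ _ tψ.pd2.diff]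
      simp only
      rw [four_eq hj hr sψ.pd1.pd1, four_eq hj hr sψ.pd2.pd2]
      congr 1; ring
    simp_rw [this]
    rw [four_integral _ tψ.lap.int.abs]
    exact hL
  · have : ∀ p, pd1 (fun p => 1 / 4 * four ψ p) p * pd2 (fun p => 1 * four φ p) p
        = four (fun p => pd1 ψ p * pd2 φ p) p := by
      intro p
      obtain ⟨j, hj⟩ := exists_quad p
      rw [four_eq hj hr (f := fun p => pd1 ψ p * pd2 φ p) (fun p hp => by simp [sψ.pd1 p hp])]
      rw [d1 _ _ tψ.diff, d2 _ _ tφ.diff]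
      simp only
      rw [four_eq hj hr sψ.pd1, four_eq hj hr sφ.pd2]
      ring
    simp_rw [this]
    rw [four_integral _ (tψ.pd1.int_mul tφ.pd2.cont)]
    exact hM

lemma Good.iter {s L M : ℝ} (h : Good s L M) (n : ℕ) : Good (s / 2 ^ n) L M := by
  induction n with
  | zero => simpa using h
  | succ n ih => rw [pow_succ, ← div_div]; exact ih.half

lemma Good.one {s L M : ℝ} (hL : 0 < L) (h : Good s L (L * M)) : Good 1 1 M := by
  obtain ⟨n, hn⟩ := pow_unbounded_of_one_lt (s / L) (one_lt_two)
  obtain ⟨ψ, φ, r, hr, hψ, hφ, sψ, sφ, bφ, bψ, h1, hM⟩ := h.iter n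
  have tψ : IsTest ψ := ⟨hψ, sψ.compact⟩
  have d1 : ∀ (f : ℝ × ℝ → ℝ), Differentiable ℝ f →
      pd1 (fun p => L⁻¹ * f p) = fun p => L⁻¹ * pd1 f p := fun f hf => by
    funext p; unfold pd1; rw [fderiv_const_mul (hf p)]; simp
  have d2 : ∀ (f : ℝ × ℝ → ℝ), Differentiable ℝ f →
      pd2 (fun p => L⁻¹ * f p) = fun p => L⁻¹ * pd2 f p := fun f hf => by
    funext p; unfold pd2; rw [fderiv_const_mul (hf p)]; simp
  refine ⟨fun p => L⁻¹ * ψ p, φ, r, hr, contDiff_const.mul hψ, hφ,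
    fun p hp => by simp [sψ p hp], sφ, bφ, ?_, ?_, ?_⟩
  · intro p
    rw [d1 _ tψ.diff]
    simp only
    rw [abs_mul, abs_of_pos (inv_pos.2 hL), inv_mul_le_iff₀ hL, mul_one]
    refine (bψ p).trans ?_
    rw [div_le_iff₀ (by positivity)]
    rw [div_lt_iff₀ hL] at hn
    linarith
  · have : ∀ p, |lap (fun p => L⁻¹ * ψ p) p| = L⁻¹ * |lap ψ p| := by
      intro p
      unfold lap
      rw [d1 _ tψ.diff, d1 _ tψ.pd1.diff, d2 _ tψ.diff, d2 _ tψ.pd2.diff]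
      simp only
      rw [← mul_add, abs_mul, abs_of_pos (inv_pos.2 hL)]
    simp_rw [this]
    rw [integral_const_mul, inv_mul_le_iff₀ hL, mul_one]
    exact h1
  · rw [d1 _ tψ.diff]
    simp only [mul_assoc]
    rw [integral_const_mul, le_inv_mul_iff₀ hL]
    exact hM


lemma pd1_mul {f g : ℝ × ℝ → ℝ} (hf : ContDiff ℝ (⊤ : ℕ∞) f) (hg : ContDiff ℝ (⊤ : ℕ∞) g) :
    pd1 (fun p => f p * g p) = fun p => pd1 f p * g p + f p * pd1 g p := by
  funext p
  unfold pd1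
  rw [fderiv_fun_mul (hf.differentiable (by simp) p) (hg.differentiable (by simp) p)]
  simp; ring

lemma pd2_mul {f g : ℝ × ℝ → ℝ} (hf : ContDiff ℝ (⊤ : ℕ∞) f) (hg : ContDiff ℝ (⊤ : ℕ∞) g) :
    pd2 (fun p => f p * g p) = fun p => pd2 f p * g p + f p * pd2 g p := by
  funext p
  unfold pd2
  rw [fderiv_fun_mul (hf.differentiable (by simp) p) (hg.differentiable (by simp) p)]
  simp; ring

lemma pd1_add {f g : ℝ × ℝ → ℝ} (hf : ContDiff ℝ (⊤ : ℕ∞) f) (hg : ContDiff ℝ (⊤ : ℕ∞) g) :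
    pd1 (fun p => f p + g p) = fun p => pd1 f p + pd1 g p := by
  funext p
  unfold pd1
  rw [fderiv_fun_add (hf.differentiable (by simp) p) (hg.differentiable (by simp) p)]
  simp

lemma pd2_add {f g : ℝ × ℝ → ℝ} (hf : ContDiff ℝ (⊤ : ℕ∞) f) (hg : ContDiff ℝ (⊤ : ℕ∞) g) :
    pd2 (fun p => f p + g p) = fun p => pd2 f p + pd2 g p := by
  funext p
  unfold pd2
  rw [fderiv_fun_add (hf.differentiable (by simp) p) (hg.differentiable (by simp) p)]
  simp

lemma pd1_eq {f : ℝ × ℝ → ℝ} (hf : ContDiff ℝ (⊤ : ℕ∞) f) {p : ℝ × ℝ} {d : ℝ}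
    (h : HasDerivAt (fun t => f (t, p.2)) d p.1) : pd1 f p = d := by
  have h1 : HasFDerivAt f (fderiv ℝ f p) (p.1, p.2) :=
    (hf.differentiable (by simp) p).hasFDerivAt
  have h2 := h1.comp_hasDerivAt p.1 ((hasDerivAt_id p.1).prodMk (hasDerivAt_const p.1 p.2))
  exact h2.unique h

lemma pd2_eq {f : ℝ × ℝ → ℝ} (hf : ContDiff ℝ (⊤ : ℕ∞) f) {p : ℝ × ℝ} {d : ℝ}
    (h : HasDerivAt (fun t => f (p.1, t)) d p.2) : pd2 f p = d := by
  have h1 : HasFDerivAt f (fderiv ℝ f p) (p.1, p.2) :=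
    (hf.differentiable (by simp) p).hasFDerivAt
  have h2 := h1.comp_hasDerivAt p.2 ((hasDerivAt_const p.2 p.1).prodMk (hasDerivAt_id p.2))
  exact h2.unique h

/-- Regularised squared radius. -/
def rr (ε : ℝ) (p : ℝ × ℝ) : ℝ := p.1 ^ 2 + p.2 ^ 2 + ε ^ 2

lemma rr_pos {ε : ℝ} (hε : 0 < ε) (p : ℝ × ℝ) : 0 < rr ε p := by unfold rr; positivity

lemma rr_contDiff (ε : ℝ) : ContDiff ℝ (⊤ : ℕ∞) (rr ε) := by unfold rr; fun_prop

/-- Regularised logarithm. -/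
def lg (ε : ℝ) (p : ℝ × ℝ) : ℝ := 1 / 2 * Real.log (rr ε p)

lemma lg_contDiff {ε : ℝ} (hε : 0 < ε) : ContDiff ℝ (⊤ : ℕ∞) (lg ε) :=
  contDiff_const.mul ((rr_contDiff ε).log fun p => (rr_pos hε p).ne')

lemma q1_contDiff {ε : ℝ} (hε : 0 < ε) : ContDiff ℝ (⊤ : ℕ∞) (fun p => p.1 / rr ε p) :=
  contDiff_fst.div (rr_contDiff ε) fun p => (rr_pos hε p).ne'

lemma q2_contDiff {ε : ℝ} (hε : 0 < ε) : ContDiff ℝ (⊤ : ℕ∞) (fun p => p.2 / rr ε p) :=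
  contDiff_snd.div (rr_contDiff ε) fun p => (rr_pos hε p).ne'

lemma rr_d1 (ε : ℝ) (p : ℝ × ℝ) : HasDerivAt (fun t => rr ε (t, p.2)) (2 * p.1) p.1 := by
  unfold rr
  simpa using ((hasDerivAt_pow 2 p.1).add_const (p.2 ^ 2)).add_const (ε ^ 2)

lemma rr_d2 (ε : ℝ) (p : ℝ × ℝ) : HasDerivAt (fun t => rr ε (p.1, t)) (2 * p.2) p.2 := by
  unfold rr
  simpa using ((hasDerivAt_pow 2 p.2).const_add (p.1 ^ 2)).add_const (ε ^ 2)

lemma lg_pd1 {ε : ℝ} (hε : 0 < ε) : pd1 (lg ε) = fun p => p.1 / rr ε p := by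
  funext p
  refine pd1_eq (lg_contDiff hε) ?_
  refine HasDerivAt.congr_deriv (((rr_d1 ε p).log (rr_pos hε _).ne').const_mul (1 / 2)) ?_
  ring

lemma lg_pd2 {ε : ℝ} (hε : 0 < ε) : pd2 (lg ε) = fun p => p.2 / rr ε p := by
  funext p
  refine pd2_eq (lg_contDiff hε) ?_
  refine HasDerivAt.congr_deriv (((rr_d2 ε p).log (rr_pos hε _).ne').const_mul (1 / 2)) ?_
  ring

lemma lg_pd11 {ε : ℝ} (hε : 0 < ε) (p : ℝ × ℝ) :
    pd1 (fun p => p.1 / rr ε p) p = 1 / rr ε p - 2 * p.1 ^ 2 / rr ε p ^ 2 := by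
  refine pd1_eq (q1_contDiff hε) ?_
  have h := (rr_pos hε p).ne'
  refine HasDerivAt.congr_deriv ((hasDerivAt_id p.1).div (rr_d1 ε p) h) ?_
  simp only [id]; field_simp

lemma lg_pd22 {ε : ℝ} (hε : 0 < ε) (p : ℝ × ℝ) :
    pd2 (fun p => p.2 / rr ε p) p = 1 / rr ε p - 2 * p.2 ^ 2 / rr ε p ^ 2 := by
  refine pd2_eq (q2_contDiff hε) ?_
  have h := (rr_pos hε p).ne'
  refine HasDerivAt.congr_deriv ((hasDerivAt_id p.2).div (rr_d2 ε p) h) ?_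
  simp only [id]; field_simp

lemma lg_pd12 {ε : ℝ} (hε : 0 < ε) (p : ℝ × ℝ) :
    pd2 (fun p => p.1 / rr ε p) p = - (2 * p.1 * p.2 / rr ε p ^ 2) := by
  refine pd2_eq (q1_contDiff hε) ?_
  have h := (rr_pos hε p).ne'
  refine HasDerivAt.congr_deriv ((hasDerivAt_const p.2 p.1).div (rr_d2 ε p) h) ?_
  ring

lemma lap_cut {ε : ℝ} (hε : 0 < ε) {χ : ℝ × ℝ → ℝ} (hχ : ContDiff ℝ (⊤ : ℕ∞) χ) (p : ℝ × ℝ) :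
    lap (fun p => χ p * lg ε p) p = χ p * (2 * ε ^ 2 / rr ε p ^ 2) +
      ((pd1 (pd1 χ) p + pd2 (pd2 χ) p) * lg ε p + 2 * (pd1 χ p * (p.1 / rr ε p)) +
        2 * (pd2 χ p * (p.2 / rr ε p))) := by
  unfold lap
  have hl := lg_contDiff hε
  rw [pd1_mul hχ hl, pd2_mul hχ hl, lg_pd1 hε, lg_pd2 hε,
    pd1_add ((pd1_contDiff hχ).mul hl) (hχ.mul (q1_contDiff hε)),
    pd2_add ((pd2_contDiff hχ).mul hl) (hχ.mul (q2_contDiff hε)),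
    pd1_mul (pd1_contDiff hχ) hl, pd1_mul hχ (q1_contDiff hε),
    pd2_mul (pd2_contDiff hχ) hl, pd2_mul hχ (q2_contDiff hε), lg_pd1 hε, lg_pd2 hε]
  simp only
  rw [lg_pd11 hε, lg_pd22 hε]
  have h := (rr_pos hε p).ne'
  have h2 : ε ^ 2 = rr ε p - p.1 ^ 2 - p.2 ^ 2 := by unfold rr; ring
  rw [h2]
  field_simp
  ring

lemma mix_cut {ε : ℝ} (hε : 0 < ε) {χ : ℝ × ℝ → ℝ} (hχ : ContDiff ℝ (⊤ : ℕ∞) χ) (p : ℝ × ℝ) :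
    pd2 (pd1 (fun p => χ p * lg ε p)) p = - (χ p * (2 * p.1 * p.2 / rr ε p ^ 2)) +
      (pd2 (pd1 χ) p * lg ε p + pd1 χ p * (p.2 / rr ε p) + pd2 χ p * (p.1 / rr ε p)) := by
  have hl := lg_contDiff hε
  rw [pd1_mul hχ hl, lg_pd1 hε,
    pd2_add ((pd1_contDiff hχ).mul hl) (hχ.mul (q1_contDiff hε)),
    pd2_mul (pd1_contDiff hχ) hl, pd2_mul hχ (q1_contDiff hε), lg_pd2 hε]
  simp only
  rw [lg_pd12 hε]
  ring

lemma int_cauchy {ε : ℝ} (hε : 0 < ε) :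
    Integrable (fun x : ℝ => ε / (x ^ 2 + ε ^ 2)) ∧ ∫ x : ℝ, ε / (x ^ 2 + ε ^ 2) = π := by
  have h : (fun x : ℝ => ε / (x ^ 2 + ε ^ 2)) = fun x => ε⁻¹ * (1 + (x / ε) ^ 2)⁻¹ := by
    funext x; field_simp; ring
  rw [h]
  constructor
  · exact (integrable_inv_one_add_sq.comp_div hε.ne').const_mul _
  · rw [integral_const_mul, Measure.integral_comp_div (fun x : ℝ => (1 + x ^ 2)⁻¹) ε,
      integral_univ_inv_one_add_sq, abs_of_pos hε, smul_eq_mul]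
    field_simp

lemma int_cauchy2 {ε : ℝ} (hε : 0 < ε) :
    Integrable (fun p : ℝ × ℝ => ε / (p.1 ^ 2 + ε ^ 2) * (ε / (p.2 ^ 2 + ε ^ 2))) ∧
    ∫ p : ℝ × ℝ, ε / (p.1 ^ 2 + ε ^ 2) * (ε / (p.2 ^ 2 + ε ^ 2)) = π ^ 2 := by
  constructor
  · exact (int_cauchy hε).1.mul_prod (int_cauchy hε).1
  · have := integral_prod_mul (μ := (volume : Measure ℝ)) (ν := (volume : Measure ℝ))
      (fun x : ℝ => ε / (x ^ 2 + ε ^ 2)) (fun x : ℝ => ε / (x ^ 2 + ε ^ 2))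
    rw [(int_cauchy hε).2] at this
    rw [sq π, ← this]; rfl

lemma log_lower {f : ℝ × ℝ → ℝ} (hf : Integrable f) (h0 : ∀ p, 0 ≤ f p) {ε : ℝ} (hε : 0 < ε)
    (hε2 : ε ≤ 1 / 2)
    (h : ∀ x y : ℝ, ε ≤ x → x ≤ 1 / 2 → x / 2 ≤ y → y ≤ x → 1 / (54 * x ^ 2) ≤ f (x, y)) :
    1 / 108 * Real.log (1 / (2 * ε)) ≤ ∫ p, f p := by
  have hf' : Integrable f ((volume : Measure ℝ).prod volume) := hf
  have e : ∫ p, f p = ∫ x : ℝ, ∫ y : ℝ, f (x, y) := integral_prod f hf'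
  have hI : Integrable (fun x : ℝ => ∫ y : ℝ, f (x, y)) := hf'.integral_prod_left
  have hI0 : ∀ x : ℝ, 0 ≤ ∫ y : ℝ, f (x, y) := fun x => integral_nonneg fun y => h0 _
  have hae := hf'.prod_right_ae
  rw [e]
  have hlow : ∫ x in Set.Ioc ε (1 / 2), (1 / 108) * (1 / x) ≤
      ∫ x in Set.Ioc ε (1 / 2), ∫ y : ℝ, f (x, y) := by
    refine setIntegral_mono_on_ae ?_ hI.integrableOn measurableSet_Ioc ?_
    · refine Integrable.const_mul ?_ _
      have : IntervalIntegrable (fun x : ℝ => 1 / x) volume ε (1 / 2) :=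
        intervalIntegral.intervalIntegrable_one_div (fun x hx => by
          rw [Set.uIcc_of_le hε2] at hx; linarith [hx.1]) continuousOn_id
      exact (intervalIntegrable_iff_integrableOn_Ioc_of_le hε2).1 this
    · filter_upwards [hae] with x hx hxm
      have hx0 : 0 < x := hε.trans hxm.1
      have h1 : ∫ y in Set.Icc (x / 2) x, 1 / (54 * x ^ 2) ≤ ∫ y in Set.Icc (x / 2) x, f (x, y) := by
        refine setIntegral_mono_on ?_ hx.integrableOn measurableSet_Icc ?_
        · exact integrableOn_const (by simp)
        · intro y hy
          exact h x y hxm.1.le hxm.2 hy.1 hy.2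
      have h2 : ∫ y in Set.Icc (x / 2) x, f (x, y) ≤ ∫ y, f (x, y) :=
        setIntegral_le_integral hx (Filter.Eventually.of_forall fun y => h0 _)
      have h3 : ∫ y in Set.Icc (x / 2) x, 1 / (54 * x ^ 2) = 1 / 108 * (1 / x) := by
        rw [setIntegral_const]
        simp [Measure.real]
        rw [ENNReal.toReal_ofReal (by linarith)]
        field_simp; norm_num
      linarith
  have hup : ∫ x in Set.Ioc ε (1 / 2), ∫ y : ℝ, f (x, y) ≤ ∫ x : ℝ, ∫ y : ℝ, f (x, y) :=
    setIntegral_le_integral hI (Filter.Eventually.of_forall hI0)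
  have hval : ∫ x in Set.Ioc ε (1 / 2), (1 / 108) * (1 / x) = 1 / 108 * Real.log (1 / (2 * ε)) := by
    rw [integral_const_mul, ← intervalIntegral.integral_of_le hε2, integral_one_div_of_pos hε (by norm_num)]
    congr 2; field_simp
  linarith


lemma aux_bounds {ε : ℝ} (hε : 0 < ε) (hε1 : ε ≤ 1 / 2) {p : ℝ × ℝ} (h1 : 1 / 2 ≤ ‖p‖)
    (h2 : ‖p‖ ≤ 3 / 4) :
    |lg ε p| ≤ 2 ∧ |p.1 / rr ε p| ≤ 4 ∧ |p.2 / rr ε p| ≤ 4 := by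
  have hR := rr_pos hε p
  have ha : |p.1| ≤ 3 / 4 := (norm_fst_le p).trans h2
  have hb : |p.2| ≤ 3 / 4 := (norm_snd_le p).trans h2
  have hlow : 1 / 4 ≤ rr ε p := by
    unfold rr
    rw [Prod.norm_def, Real.norm_eq_abs, Real.norm_eq_abs] at h1
    rcases le_max_iff.1 h1 with h | h
    · nlinarith [sq_abs p.1, sq_nonneg p.2, sq_nonneg ε]
    · nlinarith [sq_abs p.2, sq_nonneg p.1, sq_nonneg ε]
  have hup : rr ε p ≤ 3 := by
    unfold rr
    nlinarith [sq_abs p.1, sq_abs p.2, abs_nonneg p.1, abs_nonneg p.2]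
  refine ⟨?_, ?_, ?_⟩
  · unfold lg
    have u1 := Real.log_le_sub_one_of_pos hR
    have u2 := Real.log_le_sub_one_of_pos (inv_pos.2 hR)
    rw [Real.log_inv] at u2
    have u3 : (rr ε p)⁻¹ ≤ 4 := by
      rw [inv_le_comm₀ hR (by norm_num)]; linarith
    rw [abs_le]; constructor <;> linarith
  · rw [abs_div, abs_of_pos hR, div_le_iff₀ hR]; linarith
  · rw [abs_div, abs_of_pos hR, div_le_iff₀ hR]; linarith

lemma exists_bump (r R : ℝ) (hr : 0 < r) (hR : r < R) :
    ∃ χ : ℝ × ℝ → ℝ, ContDiff ℝ (⊤ : ℕ∞) χ ∧ (∀ p, 0 ≤ χ p) ∧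
      (∀ p, χ p ≤ 1) ∧ (∀ p, ‖p‖ ≤ r → χ p = 1) ∧ SuppIn R χ := by
  let c : ContDiffBump (0 : ℝ × ℝ) := ⟨r, R, hr, hR⟩
  exact ⟨c, c.contDiff, fun p => c.nonneg, fun p => c.le_one,
      fun p hp => c.one_of_mem_closedBall (mem_closedBall_zero_iff.2 hp),
      fun p hp => c.zero_of_le_dist (by rw [dist_zero_right]; exact hp.le)⟩

lemma base : ∃ L : ℝ, 0 < L ∧ ∀ M : ℝ, ∃ s : ℝ, Good s L M := by
  obtain ⟨χ, hχ, χ0, χ1, χin, χout⟩ := exists_bump (1 / 2) (3 / 4) (by norm_num) (by norm_num)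
  have tχ : IsTest χ := ⟨hχ, χout.compact⟩
  have hin : ∀ p, ‖p‖ < 1 / 2 → χ =ᶠ[nhds p] fun _ => 1 := fun p hp => by
    filter_upwards [(isOpen_lt continuous_norm continuous_const).mem_nhds hp] with q hq
    exact χin q (le_of_lt hq)
  have hconst : ∀ (f : ℝ × ℝ → ℝ) (k : ℝ), (∀ p, ‖p‖ < 1 / 2 → f p = k) → ∀ p, ‖p‖ < 1 / 2 →
      fderiv ℝ f p = 0 := fun f k hf p hp => by
    have : f =ᶠ[nhds p] fun _ => k := by
      filter_upwards [(isOpen_lt continuous_norm continuous_const).mem_nhds hp] with q hq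
      exact hf q hq
    rw [this.fderiv_eq]; simp
  have z1 : ∀ p, ‖p‖ < 1 / 2 → pd1 χ p = 0 := fun p hp => by
    unfold pd1; rw [hconst χ 1 (fun q hq => χin q hq.le) p hp]; rfl
  have z2 : ∀ p, ‖p‖ < 1 / 2 → pd2 χ p = 0 := fun p hp => by
    unfold pd2; rw [hconst χ 1 (fun q hq => χin q hq.le) p hp]; rfl
  have z11 : ∀ p, ‖p‖ < 1 / 2 → pd1 (pd1 χ) p = 0 := fun p hp => by
    rw [pd1, hconst _ 0 z1 p hp]; rfl
  have z12 : ∀ p, ‖p‖ < 1 / 2 → pd2 (pd1 χ) p = 0 := fun p hp => by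
    rw [pd2, hconst _ 0 z1 p hp]; rfl
  have z22 : ∀ p, ‖p‖ < 1 / 2 → pd2 (pd2 χ) p = 0 := fun p hp => by
    rw [pd2, hconst _ 0 z2 p hp]; rfl
  obtain ⟨B1, B10, hB1⟩ := tχ.pd1.bdd
  obtain ⟨B2, B20, hB2⟩ := tχ.pd2.bdd
  obtain ⟨B3, B30, hB3⟩ := tχ.lap.bdd
  obtain ⟨B4, B40, hB4⟩ := tχ.pd1.pd2.bdd
  let K := 2 * B3 + 8 * B1 + 8 * B2 + 2 * B4
  have K0 : 0 ≤ K := by positivity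
  let D : ℝ × ℝ → ℝ := (Metric.closedBall (0 : ℝ × ℝ) 1).indicator fun _ => K
  have Dint : Integrable D :=
    (integrable_indicator_iff Metric.isClosed_closedBall.measurableSet).2
      (integrableOn_const (isCompact_closedBall _ _).measure_lt_top.ne)
  have D0 : ∀ p, 0 ≤ D p := fun p => Set.indicator_nonneg (fun _ _ => K0) p
  have DK : ∀ p, ‖p‖ ≤ 1 → D p = K := fun p hp => Set.indicator_of_mem (by simpa using hp) _
  let V := ∫ p, D p
  have V0 : 0 ≤ V := integral_nonneg D0
  refine ⟨2 * π ^ 2 + V, by positivity, fun M => ?_⟩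
  let ε : ℝ := Real.exp (-(max 0 (108 * (M + V)))) / 2
  have hε : 0 < ε := by positivity
  have hε1 : ε ≤ 1 / 2 := by
    have : Real.exp (-(max 0 (108 * (M + V)))) ≤ 1 := by
      rw [Real.exp_le_one_iff]; simp
    show _ / 2 ≤ _
    linarith
  have hlog : M + V ≤ 1 / 108 * Real.log (1 / (2 * ε)) := by
    have : 1 / (2 * ε) = Real.exp (max 0 (108 * (M + V))) := by
      show 1 / (2 * (_ / 2)) = _
      rw [Real.exp_neg]; field_simp
    rw [this, Real.log_exp]
    linarith [le_max_right 0 (108 * (M + V))]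
  have hl := lg_contDiff hε
  have hψ : ContDiff ℝ (⊤ : ℕ∞) (fun p => χ p * lg ε p) := hχ.mul hl
  have hφ : ContDiff ℝ (⊤ : ℕ∞) (fun p => χ p * (p.1 * p.2 / rr ε p)) :=
    hχ.mul ((contDiff_fst.mul contDiff_snd).div (rr_contDiff ε) fun p => (rr_pos hε p).ne')
  have sψ : SuppIn (3 / 4) (fun p => χ p * lg ε p) := fun p hp => by simp [χout p hp]
  have sφ : SuppIn (3 / 4) (fun p => χ p * (p.1 * p.2 / rr ε p)) :=
    fun p hp => by simp [χout p hp]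
  have tψ : IsTest (fun p => χ p * lg ε p) := ⟨hψ, sψ.compact⟩
  have tφ : IsTest (fun p => χ p * (p.1 * p.2 / rr ε p)) := ⟨hφ, sφ.compact⟩
  have bφ : ∀ p, |χ p * (p.1 * p.2 / rr ε p)| ≤ 1 := fun p => by
    have hR := rr_pos hε p
    rw [abs_mul, abs_of_nonneg (χ0 p)]
    have : |p.1 * p.2 / rr ε p| ≤ 1 := by
      rw [abs_div, abs_of_pos hR, div_le_one hR, abs_le]
      unfold rr
      constructor <;> nlinarith [sq_nonneg (p.1 + p.2), sq_nonneg (p.1 - p.2), sq_nonneg ε]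
    exact mul_le_one₀ (χ1 p) (abs_nonneg _) this
  obtain ⟨s, -, hs⟩ := tψ.pd1.bdd
  -- error terms
  have E1 : ∀ p, |(pd1 (pd1 χ) p + pd2 (pd2 χ) p) * lg ε p + 2 * (pd1 χ p * (p.1 / rr ε p)) +
        2 * (pd2 χ p * (p.2 / rr ε p))| ≤ D p := by
    intro p
    rcases lt_or_ge ‖p‖ (1 / 2) with h | h
    · rw [z1 p h, z2 p h, z11 p h, z22 p h]; simpa using D0 p
    rcases lt_or_ge (3 / 4) ‖p‖ with h' | h'
    · rw [χout.pd1 p h', χout.pd2 p h', χout.pd1.pd1 p h', χout.pd2.pd2 p h']; simpa using D0 p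
    rw [DK p (by linarith)]
    obtain ⟨a1, a2, a3⟩ := aux_bounds hε hε1 h h'
    have b1 := mul_le_mul (hB3 p) a1 (abs_nonneg _) B30
    have b2 := mul_le_mul (hB1 p) a2 (abs_nonneg _) B10
    have b3 := mul_le_mul (hB2 p) a3 (abs_nonneg _) B20
    rw [← abs_mul] at b1 b2 b3
    unfold lap at b1
    show _ ≤ 2 * B3 + 8 * B1 + 8 * B2 + 2 * B4
    rw [abs_le] at *
    constructor <;> linarith
  have E2 : ∀ p, |pd2 (pd1 χ) p * lg ε p + pd1 χ p * (p.2 / rr ε p) + pd2 χ p * (p.1 / rr ε p)|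
      ≤ D p := by
    intro p
    rcases lt_or_ge ‖p‖ (1 / 2) with h | h
    · rw [z1 p h, z2 p h, z12 p h]; simpa using D0 p
    rcases lt_or_ge (3 / 4) ‖p‖ with h' | h'
    · rw [χout.pd1 p h', χout.pd2 p h', χout.pd1.pd2 p h']; simpa using D0 p
    rw [DK p (by linarith)]
    obtain ⟨a1, a2, a3⟩ := aux_bounds hε hε1 h h'
    have b1 := mul_le_mul (hB4 p) a1 (abs_nonneg _) B40
    have b2 := mul_le_mul (hB1 p) a3 (abs_nonneg _) B10
    have b3 := mul_le_mul (hB2 p) a2 (abs_nonneg _) B20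
    rw [← abs_mul] at b1 b2 b3
    show _ ≤ 2 * B3 + 8 * B1 + 8 * B2 + 2 * B4
    rw [abs_le] at *
    constructor <;> linarith
  refine ⟨s, _, _, 3 / 4, by norm_num, hψ, hφ, sψ, sφ, bφ, hs, ?_, ?_⟩
  · obtain ⟨c1, c2⟩ := int_cauchy2 hε
    have : ∫ p, |lap (fun p => χ p * lg ε p) p| ≤
        ∫ p, (2 * (ε / (p.1 ^ 2 + ε ^ 2) * (ε / (p.2 ^ 2 + ε ^ 2))) + D p) := by
      refine integral_mono tψ.lap.int.abs ((c1.const_mul 2).add Dint) fun p => ?_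
      simp only
      rw [lap_cut hε hχ]
      refine (abs_add_le _ _).trans (add_le_add ?_ (E1 p))
      have hR := rr_pos hε p
      have q : 2 * ε ^ 2 / rr ε p ^ 2 ≤ 2 * (ε / (p.1 ^ 2 + ε ^ 2) * (ε / (p.2 ^ 2 + ε ^ 2))) := by
        have e : 2 * (ε / (p.1 ^ 2 + ε ^ 2) * (ε / (p.2 ^ 2 + ε ^ 2))) =
            2 * ε ^ 2 / ((p.1 ^ 2 + ε ^ 2) * (p.2 ^ 2 + ε ^ 2)) := by field_simp
        rw [e]
        refine div_le_div_of_nonneg_left (by positivity) (by positivity) ?_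
        unfold rr
        rw [sq (_ + _ + _)]
        refine mul_le_mul ?_ ?_ (by positivity) (by positivity) <;>
          nlinarith [sq_nonneg p.1, sq_nonneg p.2]
      have q0 : 0 ≤ 2 * ε ^ 2 / rr ε p ^ 2 := by positivity
      rw [abs_of_nonneg (mul_nonneg (χ0 p) q0)]
      exact (mul_le_of_le_one_left q0 (χ1 p)).trans q
    rw [integral_add (c1.const_mul 2) Dint, integral_const_mul, c2] at this
    exact this
  · have hp := parts2 tψ.pd1 tφ
    rw [hp]
    have hi := tψ.pd1.pd2.int_mul tφ.cont
    have key : ∀ p, -(pd2 (pd1 (fun p => χ p * lg ε p)) p * (χ p * (p.1 * p.2 / rr ε p))) + D p ≥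
        2 * χ p ^ 2 * (p.1 * p.2) ^ 2 / rr ε p ^ 3 := by
      intro p
      rw [mix_cut hε hχ]
      have hR := rr_pos hε p
      have e : 2 * χ p ^ 2 * (p.1 * p.2) ^ 2 / rr ε p ^ 3 =
        χ p * (2 * p.1 * p.2 / rr ε p ^ 2) * (χ p * (p.1 * p.2 / rr ε p)) := by
        field_simp
      rw [e]
      have b := mul_le_mul (E2 p) (bφ p) (abs_nonneg _) (D0 p)
      rw [← abs_mul] at b
      have b' := le_abs_self ((pd2 (pd1 χ) p * lg ε p + pd1 χ p * (p.2 / rr ε p) +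
        pd2 χ p * (p.1 / rr ε p)) * (χ p * (p.1 * p.2 / rr ε p)))
      nlinarith
    have low := log_lower (f := fun p => -(pd2 (pd1 (fun p => χ p * lg ε p)) p *
      (χ p * (p.1 * p.2 / rr ε p))) + D p) (hi.neg.add Dint)
      (fun p => le_trans (by have := rr_pos hε p; positivity) (key p)) hε hε1 (by
        intro x y hx1 hx2 hy1 hy2
        refine le_trans ?_ (key (x, y))
        have hx0 : 0 < x := hε.trans_le hx1
        have hy0 : 0 < y := by linarith
        rw [χin (x, y) (by
          rw [Prod.norm_def, Real.norm_eq_abs, Real.norm_eq_abs]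
          simp only [abs_of_pos hx0, abs_of_pos hy0]
          exact max_le hx2 (by linarith))]
        have hR := rr_pos hε (x, y)
        have hR3 : rr ε (x, y) ≤ 3 * x ^ 2 := by
          unfold rr; simp only; nlinarith
        have hR4 : rr ε (x, y) ^ 3 ≤ (3 * x ^ 2) ^ 3 := by gcongr
        simp only
        have hxy : x ^ 2 / 2 ≤ x * y := by nlinarith
        have hxy2 : (x ^ 2 / 2) ^ 2 ≤ (x * y) ^ 2 := by gcongr
        calc 1 / (54 * x ^ 2) = 2 * 1 ^ 2 * (x ^ 2 / 2) ^ 2 / (3 * x ^ 2) ^ 3 := by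
              field_simp; norm_num
          _ ≤ 2 * 1 ^ 2 * (x * y) ^ 2 / rr ε (x, y) ^ 3 := by gcongr)
    rw [integral_add hi.fun_neg Dint, integral_neg] at low
    have : (∫ p, D p) = V := rfl
    linarith


lemma perturbation : ∃ (u G : ℝ × ℝ → ℝ) (Φ : ℕ → ℝ × ℝ → ℝ),
    Continuous u ∧ (∀ p, |u p| ≤ 1 / 2) ∧ SuppIn 1 u ∧ Measurable G ∧ Integrable G ∧ SuppIn 1 G ∧
    (∀ φ, IsTest φ → ∫ p, (lap φ p * u p + pd1 φ p * G p) = 0) ∧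
    (∀ k, IsTest (Φ k)) ∧ (∀ k p, |Φ k p| ≤ 1) ∧
    (∀ C, ∃ k, C < |∫ p, u p * pd2 (Φ k) p|) := by
  obtain ⟨L, hL, hb⟩ := base
  have hg : ∀ k : ℕ, Good 1 1 k := fun k => by
    obtain ⟨s, hs⟩ := hb (L * k)
    exact hs.one hL
  choose ψ Φ r hr hψ hΦ sψ sΦ bΦ bψ hlap hM using hg
  have tψ : ∀ k, IsTest (ψ k) := fun k => ⟨hψ k, (sψ k).compact⟩
  have tΦ : ∀ k, IsTest (Φ k) := fun k => ⟨hΦ k, (sΦ k).compact⟩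
  obtain ⟨a, ha, hub⟩ := exists_l1_unbounded (fun k j => ∫ p, pd1 (ψ j) p * pd2 (Φ k) p)
    (fun k => ⟨∫ p, |pd2 (Φ k) p|, fun j => by
      refine (abs_integral_le_integral_abs).trans ?_
      refine integral_mono ((tψ j).pd1.int_mul (tΦ k).pd2.cont).abs (tΦ k).pd2.int.abs fun p => ?_
      simp only
      rw [abs_mul]
      exact mul_le_of_le_one_left (abs_nonneg _) (bψ j p)⟩) hM
  -- normalise
  obtain ⟨a, ha, ha2, hub⟩ : ∃ a : ℕ → ℝ, Summable (fun j => |a j|) ∧ ∑' j, |a j| ≤ 1 / 2 ∧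
      ∀ C, ∃ k, C < |∑' j, a j * ∫ p, pd1 (ψ j) p * pd2 (Φ k) p| := by
    have hN : 0 ≤ ∑' j, |a j| := tsum_nonneg fun j => abs_nonneg _
    set N := ∑' j, |a j| with hNd
    have hc : 0 < 1 / (2 * (N + 1)) := by positivity
    refine ⟨fun j => 1 / (2 * (N + 1)) * a j, ?_, ?_, ?_⟩
    · simp only [abs_mul]; exact ha.mul_left _
    · simp only [abs_mul]
      rw [tsum_mul_left, ← hNd, abs_of_pos hc, one_div_mul_eq_div, div_le_div_iff₀ (by positivity) (by norm_num)]
      linarith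
    · intro C
      obtain ⟨k, hk⟩ := hub (C * (2 * (N + 1)))
      refine ⟨k, ?_⟩
      simp only [mul_assoc]
      rw [tsum_mul_left, abs_mul, abs_of_pos hc, one_div_mul_eq_div, lt_div_iff₀ (by positivity)]
      exact hk
  have hub1 : ∀ j p, ‖a j * pd1 (ψ j) p‖ ≤ |a j| := fun j p => by
    rw [Real.norm_eq_abs, abs_mul]; exact mul_le_of_le_one_right (abs_nonneg _) (bψ j p)
  have hsu : ∀ p, Summable fun j => ‖a j * pd1 (ψ j) p‖ := fun p =>
    Summable.of_nonneg_of_le (fun _ => norm_nonneg _) (fun j => hub1 j p) ha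
  have cu : Continuous (fun p => ∑' j, a j * pd1 (ψ j) p) :=
    continuous_tsum (fun j => continuous_const.mul (tψ j).pd1.cont) ha hub1
  have cG : ∀ j, Continuous (fun p => a j * lap (ψ j) p) := fun j =>
    continuous_const.mul (tψ j).lap.cont
  have iG : ∀ j, Integrable (fun p => a j * lap (ψ j) p) := fun j => (tψ j).lap.int.const_mul _
  have eG : ∀ j, ∫ p, ‖a j * lap (ψ j) p‖ = |a j| * ∫ p, |lap (ψ j) p| := fun j => by
    simp only [Real.norm_eq_abs, abs_mul]; rw [integral_const_mul]
  have eG1 : ∀ j, ∫ p, ‖a j * lap (ψ j) p‖ ≤ |a j| := fun j => by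
    rw [eG]; exact mul_le_of_le_one_right (abs_nonneg _) (hlap j)
  have sG : Summable fun j => ∫ p, ‖a j * lap (ψ j) p‖ :=
    Summable.of_nonneg_of_le (fun j => integral_nonneg fun p => norm_nonneg _) eG1 ha
  have iGs := integrable_tsum' cG iG sG
  refine ⟨fun p => ∑' j, a j * pd1 (ψ j) p, fun p => ∑' j, a j * lap (ψ j) p, Φ, cu, ?_, ?_,
    Measurable.tsum fun j => (cG j).measurable, iGs, ?_, ?_, tΦ, bΦ, ?_⟩
  · intro p
    refine (norm_tsum_le_tsum_norm (hsu p)).trans (le_trans ?_ ha2)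
    exact (hsu p).tsum_le_tsum (fun j => hub1 j p) ha
  · intro p hp
    have : ∀ j, a j * pd1 (ψ j) p = 0 := fun j => by
      rw [(sψ j).pd1 p ((hr j).trans hp), mul_zero]
    simp [this]
  · intro p hp
    have : ∀ j, a j * lap (ψ j) p = 0 := fun j => by
      rw [(sψ j).lap p ((hr j).trans hp), mul_zero]
    simp [this]
  · intro φ tφ
    obtain ⟨B, B0, hB⟩ := tφ.pd1.bdd
    -- first series
    have i1 : ∀ j, Integrable (fun p => lap φ p * (a j * pd1 (ψ j) p)) := fun j =>
      tφ.lap.int_mul (continuous_const.mul (tψ j).pd1.cont)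
    have s1 : Summable fun j => ∫ p, ‖lap φ p * (a j * pd1 (ψ j) p)‖ := by
      refine Summable.of_nonneg_of_le (fun j => integral_nonneg fun p => norm_nonneg _) (fun j => ?_)
        (ha.mul_left (∫ p, |lap φ p|))
      rw [← integral_mul_const]
      refine integral_mono (i1 j).norm (tφ.lap.int.abs.mul_const _) fun p => ?_
      simp only
      rw [norm_mul]
      exact mul_le_mul_of_nonneg_left (hub1 j p) (abs_nonneg _)
    have i2 : ∀ j, Integrable (fun p => pd1 φ p * (a j * lap (ψ j) p)) := fun j =>
      tφ.pd1.int_mul (cG j)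
    have s2 : Summable fun j => ∫ p, ‖pd1 φ p * (a j * lap (ψ j) p)‖ := by
      refine Summable.of_nonneg_of_le (fun j => integral_nonneg fun p => norm_nonneg _) (fun j => ?_)
        (sG.mul_left B)
      rw [← integral_const_mul]
      refine integral_mono (i2 j).norm ((iG j).norm.const_mul _) fun p => ?_
      simp only
      rw [norm_mul]
      exact mul_le_mul_of_nonneg_right (hB p) (norm_nonneg _)
    have h1 := hasSum_integral_of_summable_integral_norm i1 s1
    have h2 := hasSum_integral_of_summable_integral_norm i2 s2
    simp only [tsum_mul_left] at h1 h2
    have I1 : Integrable (fun p => lap φ p * ∑' j, a j * pd1 (ψ j) p) := tφ.lap.int_mul cu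
    have I2 : Integrable (fun p => pd1 φ p * ∑' j, a j * lap (ψ j) p) :=
      iGs.bdd_mul tφ.pd1.cont.aestronglyMeasurable (Filter.Eventually.of_forall hB)
    rw [integral_add I1 I2]
    have h3 := h1.add h2
    have h4 : ∀ j, (∫ p, lap φ p * (a j * pd1 (ψ j) p)) + ∫ p, pd1 φ p * (a j * lap (ψ j) p) = 0 := by
      intro j
      rw [← integral_add (i1 j) (i2 j)]
      have : ∀ p, lap φ p * (a j * pd1 (ψ j) p) + pd1 φ p * (a j * lap (ψ j) p) =
        a j * (lap φ p * pd1 (ψ j) p + pd1 φ p * lap (ψ j) p) := fun p => by ring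
      simp_rw [this]
      rw [integral_const_mul, weak_block tφ (tψ j), mul_zero]
    simp only [h4] at h3
    exact h3.unique hasSum_zero
  · intro C
    obtain ⟨k, hk⟩ := hub C
    refine ⟨k, ?_⟩
    have i1 : ∀ j, Integrable (fun p => (a j * pd1 (ψ j) p) * pd2 (Φ k) p) := fun j =>
      (tΦ k).pd2.int_mul' (continuous_const.mul (tψ j).pd1.cont)
    have s1 : Summable fun j => ∫ p, ‖(a j * pd1 (ψ j) p) * pd2 (Φ k) p‖ := by
      refine Summable.of_nonneg_of_le (fun j => integral_nonneg fun p => norm_nonneg _) (fun j => ?_)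
        (ha.mul_right (∫ p, |pd2 (Φ k) p|))
      rw [← integral_const_mul]
      refine integral_mono (i1 j).norm ((tΦ k).pd2.int.abs.const_mul _) fun p => ?_
      simp only
      rw [norm_mul]
      exact mul_le_mul_of_nonneg_right (hub1 j p) (abs_nonneg _)
    have h1 := (hasSum_integral_of_summable_integral_norm i1 s1).tsum_eq
    simp only [tsum_mul_right] at h1
    simp only [mul_assoc, integral_const_mul] at h1
    rw [← h1]
    exact hk

/-- There exist a continuous compactly supported probability density `ϱ` on `ℝ²` and a Borel
vector field `b` with compact support such that `|b|ϱ ∈ L¹(ℝ²)`, the equation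
`Δϱ − div(ϱ b) = 0` holds in the weak sense (`∫ [Δφ + ⟨b,∇φ⟩] ϱ dx = 0` for all test `φ`),
but `ϱ ∉ W^{1,1}_loc(ℝ²)`. -/
theorem continuous_density_FPK_not_W11loc :
    ∃ (ϱ : ℝ × ℝ → ℝ) (b : ℝ × ℝ → ℝ × ℝ),
      Continuous ϱ ∧ HasCompactSupport ϱ ∧ (∀ p, 0 ≤ ϱ p) ∧ (∫ p, ϱ p = 1) ∧
      Measurable b ∧ HasCompactSupport b ∧
      Integrable (fun p => emag (b p) * ϱ p) ∧
      (∀ φ : ℝ × ℝ → ℝ, IsTest φ →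
        ∫ p, (pd1 (pd1 φ) p + pd2 (pd2 φ) p + fderiv ℝ φ p (b p)) * ϱ p = 0) ∧
      ¬ MemW11loc ϱ := by
  obtain ⟨u, G, Φ, cu, bu, su, mG, iG, sG, wG, tΦ, bΦ, hub⟩ := perturbation
  obtain ⟨η, hη, η0, η1, ηin, ηout⟩ := exists_bump 1 2 (by norm_num) (by norm_num)
  obtain ⟨ζ, hζ, ζ0, ζ1, ζin, ζout⟩ := exists_bump 2 3 (by norm_num) (by norm_num)
  have tη : IsTest η := ⟨hη, ηout.compact⟩
  have tζ : IsTest ζ := ⟨hζ, ζout.compact⟩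
  -- the unnormalised density
  set w : ℝ × ℝ → ℝ := fun p => η p + u p with hw
  have cw : Continuous w := tη.cont.add cu
  have sw : SuppIn 2 w := fun p hp => by
    simp [hw, ηout p hp, su p (by linarith)]
  have win : ∀ p, ‖p‖ ≤ 1 → 1 / 2 ≤ w p := fun p hp => by
    have := (abs_le.1 (bu p)).1
    simp only [hw, ηin p hp]; linarith
  have w0 : ∀ p, 0 ≤ w p := fun p => by
    rcases le_or_gt ‖p‖ 1 with h | h
    · linarith [win p h]
    · simp only [hw, su p h, add_zero]; exact η0 p
  have iw : Integrable w := cw.integrable_of_hasCompactSupport sw.compact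
  have Ipos : 0 < ∫ p, w p := by
    refine (integral_pos_iff_support_of_nonneg (fun p => w0 p) iw).2 ?_
    refine (cw.isOpen_support.measure_pos volume ⟨0, ?_⟩)
    have := win 0 (by simp)
    simp only [Function.mem_support]; linarith
  set I := ∫ p, w p with hI
  -- the flux
  set F : ℝ × ℝ → ℝ × ℝ := fun p => (pd1 η p + G p, pd2 η p) with hF
  have F0 : ∀ p, w p = 0 → F p = 0 := fun p hp => by
    have hp1 : 1 < ‖p‖ := by
      by_contra hcon
      linarith [win p (not_lt.1 hcon)]
    have hη0 : η p = 0 := by simpa [hw, su p hp1] using hp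
    have hmin : IsLocalMin η p := Filter.Eventually.of_forall fun q => by rw [hη0]; exact η0 q
    have hd := hmin.fderiv_eq_zero
    simp [hF, pd1, pd2, hd, sG p hp1]
  have mF : Measurable F :=
    (tη.pd1.cont.measurable.add mG).prodMk tη.pd2.cont.measurable
  have hbw : ∀ p, w p • ((w p)⁻¹ • F p) = F p := fun p => by
    rcases eq_or_ne (w p) 0 with h | h
    · simp [h, F0 p h]
    · rw [smul_smul, mul_inv_cancel₀ h, one_smul]
  refine ⟨fun p => I⁻¹ * w p, fun p => (w p)⁻¹ • F p, continuous_const.mul cw,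
    SuppIn.compact (r := 2) (fun p hp => by simp [sw p hp]),
    fun p => mul_nonneg (inv_nonneg.2 Ipos.le) (w0 p), ?_, cw.measurable.inv.smul mF, ?_, ?_, ?_, ?_⟩
  · rw [integral_const_mul, ← hI, inv_mul_cancel₀ Ipos.ne']
  · refine HasCompactSupport.intro (isCompact_closedBall (0 : ℝ × ℝ) 2) fun p hp => ?_
    rw [sw p (by simpa using hp)]; simp
  · have e : ∀ p, emag ((w p)⁻¹ • F p) * (I⁻¹ * w p) = I⁻¹ * emag (F p) := fun p => by
      have : emag (F p) = w p * emag ((w p)⁻¹ • F p) := by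
        conv_lhs => rw [← hbw p]
        unfold emag
        rw [← Real.sqrt_sq (w0 p), ← Real.sqrt_mul (sq_nonneg _), Real.sqrt_sq (w0 p)]
        congr 1
        simp only [Prod.smul_fst, Prod.smul_snd, smul_eq_mul]
        ring
      rw [this]; ring
    simp only [e]
    refine Integrable.const_mul ?_ _
    refine Integrable.mono' ((tη.pd1.int.add iG).abs.add tη.pd2.int.abs) ?_
      (Filter.Eventually.of_forall fun p => ?_)
    · unfold emag
      exact (((mF.fst.pow_const 2).add (mF.snd.pow_const 2)).sqrt).aestronglyMeasurable
    · unfold emag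
      rw [Real.norm_eq_abs, abs_of_nonneg (Real.sqrt_nonneg _)]
      refine Real.sqrt_le_iff.2 ⟨by simp only [Pi.add_apply]; positivity, ?_⟩
      simp only [hF, Pi.add_apply]
      nlinarith [sq_abs (pd1 η p + G p), sq_abs (pd2 η p),
        mul_nonneg (abs_nonneg (pd1 η p + G p)) (abs_nonneg (pd2 η p))]
  · intro φ tφ
    have e : ∀ p, (pd1 (pd1 φ) p + pd2 (pd2 φ) p + fderiv ℝ φ p ((w p)⁻¹ • F p)) * (I⁻¹ * w p) =
        I⁻¹ * ((lap φ p * η p + (pd1 φ p * pd1 η p + pd2 φ p * pd2 η p)) +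
          (lap φ p * u p + pd1 φ p * G p)) := fun p => by
      have h1 : fderiv ℝ φ p ((w p)⁻¹ • F p) * w p = fderiv ℝ φ p (F p) := by
        conv_rhs => rw [← hbw p]
        rw [map_smul _ (w p), smul_eq_mul, mul_comm]
      have h2 : fderiv ℝ φ p (F p) = (pd1 η p + G p) * pd1 φ p + pd2 η p * pd2 φ p := by
        have : F p = (pd1 η p + G p) • ((1 : ℝ), (0 : ℝ)) + pd2 η p • ((0 : ℝ), (1 : ℝ)) := by
          simp [hF]
        rw [this, map_add, map_smul, map_smul]; rfl
      have h3 : (pd1 (pd1 φ) p + pd2 (pd2 φ) p + fderiv ℝ φ p ((w p)⁻¹ • F p)) * (I⁻¹ * w p) =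
          I⁻¹ * (lap φ p * w p + fderiv ℝ φ p ((w p)⁻¹ • F p) * w p) := by
        unfold lap; ring
      rw [h3, h1, h2]
      simp only [hw]; ring
    simp only [e]
    obtain ⟨B, -, hB⟩ := tφ.pd1.bdd
    have j1 := (tφ.lap.int_mul tη.cont).fun_add
      ((tφ.pd1.int_mul tη.pd1.cont).fun_add (tφ.pd2.int_mul tη.pd2.cont))
    have j2 := (tφ.lap.int_mul cu).fun_add
      (iG.bdd_mul tφ.pd1.cont.aestronglyMeasurable (Filter.Eventually.of_forall hB))
    rw [integral_const_mul, integral_add j1 j2, weak_smooth tφ tη, wG φ tφ]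
    simp
  · intro hW
    obtain ⟨-, g₁, g₂, -, ig, -, hg⟩ := hW ζ tζ
    have e : ∀ p, ζ p * (I⁻¹ * w p) = I⁻¹ * w p := fun p => by
      rcases le_or_gt ‖p‖ 2 with h | h
      · rw [ζin p h, one_mul]
      · rw [sw p h]; simp
    simp only [e] at hg
    obtain ⟨k, hk⟩ := hub (I * (∫ p, |g₂ p|) + ∫ p, |pd2 η p|)
    have h1 := hg (Φ k) (tΦ k)
    have h2 : ∫ p, I⁻¹ * w p * pd2 (Φ k) p =
        I⁻¹ * ((∫ p, η p * pd2 (Φ k) p) + ∫ p, u p * pd2 (Φ k) p) := by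
      rw [← integral_add (tη.int_mul (tΦ k).pd2.cont) ((tΦ k).pd2.int_mul' cu), ← integral_const_mul]
      refine integral_congr_ae (Filter.Eventually.of_forall fun p => ?_)
      simp only [hw]; ring
    rw [h2, parts2 tη (tΦ k)] at h1
    have bd : ∀ g : ℝ × ℝ → ℝ, Integrable g → |∫ p, g p * Φ k p| ≤ ∫ p, |g p| := fun g ig => by
      refine abs_integral_le_integral_abs.trans ?_
      refine integral_mono_of_nonneg (Filter.Eventually.of_forall fun p => abs_nonneg _) ig.abs
        (Filter.Eventually.of_forall fun p => ?_)
      simp only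
      rw [abs_mul]; exact mul_le_of_le_one_right (abs_nonneg _) (bΦ k p)
    have b1 := bd g₂ ig
    have b2 := bd _ tη.pd2.int
    have h3 : ∫ p, u p * pd2 (Φ k) p =
        (∫ p, pd2 η p * Φ k p) - I * ∫ p, g₂ p * Φ k p := by
      rw [h1]
      have := Ipos.ne'
      field_simp
      ring
    rw [h3] at hk
    have h4 := abs_sub (∫ p, pd2 η p * Φ k p) (I * ∫ p, g₂ p * Φ k p)
    rw [abs_mul, abs_of_pos Ipos] at h4
    have h5 := mul_le_mul_of_nonneg_left b1 Ipos.le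
    linarith
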